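/- arXiv:2503.12241 — 3 statements merged into one kernel-verified Lean document; each statement's English description precedes it below -/
import Mathlib

section
/- Let p_1 > p_2 > ⋯ > p_k ≥ 2 be pairwise coprime integers with k ≥ 2, let T = p_1 p_2 ⋯ p_k, and let S = ⟨a_1, …, a_k⟩ where a_i = T/p_i for each i (a supersymmetric numerical semigroup). Then Δ_0(S) = {1}. -/
open Finset

/-- `Zfac a x`: the set of factorizations of `x` with respect to the generators `a`. -/
def Zfac {k : ℕ} (a : Fin k → ℕ) (x : ℕ) : Set (Fin k → ℕ) :=
  {z | ∑ j, z j * a j = x}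

/-- The `∞`-length of a factorization: the maximum coordinate. -/
def linf {k : ℕ} (z : Fin k → ℕ) : ℕ :=
  Finset.univ.sup z

/-- The `0`-length of a factorization: the size of its support. -/
def lzero {k : ℕ} (z : Fin k → ℕ) : ℕ :=
  (Finset.univ.filter fun i => z i ≠ 0).card

/-- `𝓛∞(x)`: the set of `∞`-lengths of factorizations of `x`. -/
def LinfSet {k : ℕ} (a : Fin k → ℕ) (x : ℕ) : Set ℕ :=
  linf '' Zfac a x

/-- `𝓛∞(x, i)`: `∞`-lengths of factorizations whose maximum coordinate is attained at `i`. -/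
def LinfSetI {k : ℕ} (a : Fin k → ℕ) (x : ℕ) (i : Fin k) : Set ℕ :=
  linf '' {z | z ∈ Zfac a x ∧ z i = linf z}

/-- `𝓛₀(x)`: the set of `0`-lengths of factorizations of `x`. -/
def LzeroSet {k : ℕ} (a : Fin k → ℕ) (x : ℕ) : Set ℕ :=
  lzero '' Zfac a x

/-- The set of differences between consecutive elements of a set `T ⊆ ℕ`. -/
def deltaSet (T : Set ℕ) : Set ℕ :=
  {d | ∃ u ∈ T, ∃ v ∈ T, u < v ∧ v - u = d ∧ ∀ t ∈ T, ¬(u < t ∧ t < v)}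

/-- `Δ∞(x)`. -/
def DeltaInf {k : ℕ} (a : Fin k → ℕ) (x : ℕ) : Set ℕ := deltaSet (LinfSet a x)

/-- `Δ∞(S) = ⋃ x ∈ S, Δ∞(x)` (for `x ∉ S` the contribution is empty). -/
def DeltaInfS {k : ℕ} (a : Fin k → ℕ) : Set ℕ := ⋃ x : ℕ, DeltaInf a x

/-- `Δ₀(x)`. -/
def DeltaZero {k : ℕ} (a : Fin k → ℕ) (x : ℕ) : Set ℕ := deltaSet (LzeroSet a x)

/-- `Δ₀(S) = ⋃ x ∈ S, Δ₀(x)` (for `x ∉ S` the contribution is empty). -/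
def DeltaZeroS {k : ℕ} (a : Fin k → ℕ) : Set ℕ := ⋃ x : ℕ, DeltaZero a x

/-- `a` is a system of minimal generators: no generator is a `ℕ`-combination of the others. -/
def MinimalGens {k : ℕ} (a : Fin k → ℕ) : Prop :=
  ∀ i : Fin k, ¬ ∃ z : Fin k → ℕ, z i = 0 ∧ ∑ j, z j * a j = a i

/-! If a factorization `w` of `x` has `w i = 0` while `z i ≠ 0` in another factorization `z`, then
reducing modulo `p i` gives `p i ∣ z i`. Thus `z i * (T / p i)` is a multiple of `T`, hence of every
generator, and it can be moved onto any other generator that already occurs in `z`. This shortens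
the support by exactly one, so every `0`-length of `x` except the smallest has a predecessor. -/

theorem one_mem_deltaSet {L : Set ℕ} {n : ℕ} (hn : n ∈ L) (hn' : n + 1 ∈ L) : 1 ∈ deltaSet L :=
  ⟨n, hn, n + 1, hn', by omega, by omega, fun _ _ => by omega⟩

theorem deltaSet_subset_singleton_one {L : Set ℕ}
    (hL : ∀ u ∈ L, ∀ v ∈ L, u < v → ∃ t ∈ L, t + 1 = v) : deltaSet L ⊆ {1} := by
  rintro _ ⟨u, hu, v, hv, huv, rfl, hgap⟩
  obtain ⟨t, ht, rfl⟩ := hL u hu v hv huv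
  have := hgap t ht
  simp only [Set.mem_singleton_iff]
  omega

section Factorizations

variable {k : ℕ} {a z w : Fin k → ℕ} {x m : ℕ} {i j : Fin k}

theorem lzero_eq_zero_iff : lzero z = 0 ↔ z = 0 := by
  simp [lzero, Finset.filter_eq_empty_iff, funext_iff]

theorem lzero_update_zero_add_one (hi : z i ≠ 0) : lzero (Function.update z i 0) + 1 = lzero z := by
  have support_eq : (univ.filter fun l => Function.update z i 0 l ≠ 0)
      = (univ.filter fun l => z l ≠ 0).erase i := by
    ext l
    by_cases hl : l = i <;> simp [hl]
  rw [lzero, support_eq]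
  exact card_erase_add_one (by simpa using hi)

theorem lzero_add_single (hj : z j ≠ 0) : lzero (z + Pi.single j m) = lzero z := by
  refine congrArg card (filter_congr fun l _ => ?_)
  by_cases hl : l = j
  · simp [hl, hj]
  · simp [hl]

theorem exists_eq_zero_and_ne_zero_of_lzero_lt (h : lzero w < lzero z) :
    ∃ i, w i = 0 ∧ z i ≠ 0 := by
  obtain ⟨i, hz, hw⟩ := exists_mem_notMem_of_card_lt_card h
  exact ⟨i, by simpa using hw, by simpa using hz⟩

theorem exists_ne_and_ne_zero_of_one_lt_lzero (h : 1 < lzero z) (i : Fin k) :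
    ∃ j, j ≠ i ∧ z j ≠ 0 := by
  obtain ⟨j, hj, hji⟩ := exists_mem_ne h i
  exact ⟨j, hji, by simpa using hj⟩

theorem eq_zero_of_mem_zfac_zero (ha : ∀ i, a i ≠ 0) (hz : z ∈ Zfac a 0) : z = 0 := by
  funext i
  have hterm : z i * a i = 0 := Finset.sum_eq_zero_iff.1 hz i (mem_univ i)
  exact (mul_eq_zero.1 hterm).resolve_right (ha i)

theorem lzero_pos_of_mem_zfac (ha : ∀ i, a i ≠ 0) (hw : w ∈ Zfac a x) (hz : z ∈ Zfac a x)
    (hz0 : z ≠ 0) : 0 < lzero w := by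
  refine Nat.pos_of_ne_zero fun h => hz0 ?_
  obtain rfl := lzero_eq_zero_iff.1 h
  obtain rfl : 0 = x := by simpa [Zfac] using hw
  exact eq_zero_of_mem_zfac_zero ha hz

theorem update_add_single_mem_zfac (hz : z ∈ Zfac a x) (hij : i ≠ j)
    (h : z i * a i = m * a j) : Function.update (z + Pi.single j m) i 0 ∈ Zfac a x := by
  have split : Function.update (z + Pi.single j m) i 0 + Pi.single i (z i)
      = z + Pi.single j m := by
    ext l
    by_cases hl : l = i
    · subst hl; simp [hij]
    · simp [hl]
  have hsum := congrArg (· ⬝ᵥ a) split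
  simp only [add_dotProduct, single_dotProduct, h] at hsum
  exact (Nat.add_right_cancel hsum).trans hz

theorem exists_mem_lzeroSet_add_one_eq (hz : z ∈ Zfac a x) (hij : i ≠ j) (hi : z i ≠ 0)
    (hj : z j ≠ 0) (h : a j ∣ z i * a i) : ∃ t ∈ LzeroSet a x, t + 1 = lzero z := by
  obtain ⟨m, hm⟩ := h
  refine ⟨_, ⟨_, update_add_single_mem_zfac hz hij (hm.trans (mul_comm _ _)), rfl⟩, ?_⟩
  rw [lzero_update_zero_add_one (by simp [hi]), lzero_add_single hj]

theorem one_mem_deltaZeroS (hij : i ≠ j) (hj : a j ≠ 0) : 1 ∈ DeltaZeroS a := by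
  let z : Fin k → ℕ := fun _ => a j
  have hz : z ∈ Zfac a (∑ l, z l * a l) := rfl
  obtain ⟨t, ht, htz⟩ := exists_mem_lzeroSet_add_one_eq hz hij hj hj (dvd_mul_right _ _)
  exact Set.mem_iUnion.2 ⟨_, one_mem_deltaSet ht (htz ▸ ⟨z, hz, rfl⟩)⟩

end Factorizations

section Cofactor

variable {ι : Type*} [Fintype ι] [DecidableEq ι] {p : ι → ℕ} {i j : ι}

/-- The product of all `p j` with `j ≠ i`: the `i`-th generator `T / p i` of a supersymmetric
semigroup, written without division. -/
def cofactor (p : ι → ℕ) (i : ι) : ℕ :=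
  ∏ j ∈ univ.erase i, p j

theorem mul_cofactor (p : ι → ℕ) (i : ι) : p i * cofactor p i = ∏ j, p j :=
  mul_prod_erase _ _ (mem_univ i)

theorem prod_div_eq_cofactor (hi : p i ≠ 0) : (∏ j, p j) / p i = cofactor p i := by
  rw [← mul_cofactor p i, Nat.mul_div_cancel_left _ (Nat.pos_of_ne_zero hi)]

theorem cofactor_ne_zero (hp : ∀ i, p i ≠ 0) (i : ι) : cofactor p i ≠ 0 :=
  prod_ne_zero_iff.2 fun j _ => hp j

theorem dvd_cofactor (hij : i ≠ j) : p i ∣ cofactor p j :=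
  dvd_prod_of_mem p (mem_erase.2 ⟨hij, mem_univ i⟩)

theorem coprime_cofactor (hcop : Pairwise fun i j => Nat.Coprime (p i) (p j)) (i : ι) :
    Nat.Coprime (p i) (cofactor p i) :=
  Nat.Coprime.prod_right fun _ hj => hcop (ne_of_mem_erase hj).symm

theorem cofactor_dvd_mul_cofactor {n : ℕ} (h : p i ∣ n) (j : ι) :
    cofactor p j ∣ n * cofactor p i := by
  calc cofactor p j ∣ ∏ l, p l := Dvd.intro_left _ (mul_cofactor p j)
    _ = p i * cofactor p i := (mul_cofactor p i).symm
    _ ∣ n * cofactor p i := Nat.mul_dvd_mul_right h _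

end Cofactor

section Supersymmetric

variable {k : ℕ} {p z w : Fin k → ℕ} {x : ℕ}

theorem mul_cofactor_modEq_of_mem_zfac (hz : z ∈ Zfac (cofactor p) x) (i : Fin k) :
    z i * cofactor p i ≡ x [MOD p i] := by
  have hrest : p i ∣ ∑ j ∈ univ.erase i, z j * cofactor p j :=
    dvd_sum fun j hj => (dvd_cofactor (ne_of_mem_erase hj).symm).mul_left _
  calc z i * cofactor p i
      ≡ z i * cofactor p i + ∑ j ∈ univ.erase i, z j * cofactor p j [MOD p i] :=
        ((Nat.modEq_zero_iff_dvd.2 hrest).add_left _).symm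
    _ = x := (add_sum_erase _ (fun j => z j * cofactor p j) (mem_univ i)).trans hz

theorem modEq_of_mem_zfac_cofactor (hcop : Pairwise fun i j => Nat.Coprime (p i) (p j))
    (hz : z ∈ Zfac (cofactor p) x) (hw : w ∈ Zfac (cofactor p) x) (i : Fin k) :
    z i ≡ w i [MOD p i] :=
  Nat.ModEq.cancel_right_of_coprime (coprime_cofactor hcop i)
    ((mul_cofactor_modEq_of_mem_zfac hz i).trans (mul_cofactor_modEq_of_mem_zfac hw i).symm)

theorem exists_mem_lzeroSet_cofactor_add_one_eq (hp : ∀ i, p i ≠ 0)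
    (hcop : Pairwise fun i j => Nat.Coprime (p i) (p j)) (hz : z ∈ Zfac (cofactor p) x)
    (hw : w ∈ Zfac (cofactor p) x) (hlt : lzero w < lzero z) :
    ∃ t ∈ LzeroSet (cofactor p) x, t + 1 = lzero z := by
  obtain ⟨i, hwi, hzi⟩ := exists_eq_zero_and_ne_zero_of_lzero_lt hlt
  have hdvd : p i ∣ z i :=
    Nat.modEq_zero_iff_dvd.1 (hwi ▸ modEq_of_mem_zfac_cofactor hcop hz hw i)
  have hw_pos : 0 < lzero w :=
    lzero_pos_of_mem_zfac (cofactor_ne_zero hp) hw hz fun h => hzi (congrFun h i)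
  obtain ⟨j, hji, hzj⟩ := exists_ne_and_ne_zero_of_one_lt_lzero (lt_of_le_of_lt hw_pos hlt) i
  exact exists_mem_lzeroSet_add_one_eq hz hji.symm hzi hzj (cofactor_dvd_mul_cofactor hdvd j)

theorem deltaZeroS_cofactor_subset (hp : ∀ i, p i ≠ 0)
    (hcop : Pairwise fun i j => Nat.Coprime (p i) (p j)) : DeltaZeroS (cofactor p) ⊆ {1} := by
  refine Set.iUnion_subset fun x => deltaSet_subset_singleton_one ?_
  rintro _ ⟨w, hw, rfl⟩ _ ⟨z, hz, rfl⟩ hlt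
  exact exists_mem_lzeroSet_cofactor_add_one_eq hp hcop hz hw hlt

theorem stmt_14_general (hk : 2 ≤ k) (hp : ∀ i, p i ≠ 0)
    (hcop : Pairwise fun i j => Nat.Coprime (p i) (p j)) :
    DeltaZeroS (fun i => (∏ j, p j) / p i) = {1} := by
  simp only [prod_div_eq_cofactor (hp _)]
  have : Nontrivial (Fin k) := Fin.nontrivial_iff_two_le.2 hk
  obtain ⟨i, j, hij⟩ := exists_pair_ne (Fin k)
  exact (deltaZeroS_cofactor_subset hp hcop).antisymm
    (Set.singleton_subset_iff.2 (one_mem_deltaZeroS hij (cofactor_ne_zero hp j)))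

end Supersymmetric

/-- For a supersymmetric numerical semigroup with `a_i = T/p_i`, `Δ₀(S) = {1}`. -/
theorem stmt_14 (k : ℕ) (hk : 2 ≤ k) (p : Fin k → ℕ)
    (hdec : StrictAnti p) (h2 : ∀ i, 2 ≤ p i)
    (hcop : ∀ i j, i ≠ j → Nat.Coprime (p i) (p j))
    (T : ℕ) (hT : T = ∏ i, p i) :
    DeltaZeroS (fun i => T / p i) = {1} := by
  subst hT
  exact stmt_14_general hk (fun i => Nat.ne_zero_of_lt (h2 i)) fun i j => hcop i j
end

section
/- Let S = ⟨m, a_1, …, a_{m−1}⟩ be a numerical semigroup of maximal embedding dimension: m ≥ 3, the generators m, a_1, …, a_{m−1} are minimal generators, and a_i ≡ i (mod m) for each i = 1, …, m−1. Then Δ_0(S) = {1, 2}. -/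
open Finset

/-!
A generator `a i` is smaller than every nonzero combination of the other generators that is
congruent to it modulo a generator `a p`. Hence, if there are `m = a p` minimal generators, they
represent each residue modulo `m` exactly once, and a sum of two generators other than `m` has a
second factorization, one that uses `m`. Trading two support elements of a factorization for it
lowers the `0`-length by at most two and raises the coefficient of `m`, so repeated trading
terminates and never skips two consecutive lengths: the `0`-delta set is contained in `{1, 2}`.

The value `1` occurs at `2 * a i * a j`, which has factorizations supported on `{i}` and on
`{i, j}`. The value `2` occurs at the sum of all generators: it has a factorization of `0`-length
`m`, but one omitting exactly one generator would express that generator by the others.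
-/

section Factorizations

variable {k : ℕ} {a w z : Fin k → ℕ} {p : Fin k} {x : ℕ}

theorem mem_Zfac : z ∈ Zfac a x ↔ z ⬝ᵥ a = x := Iff.rfl

theorem apply_le_of_mem_Zfac (hp : 0 < a p) (hz : z ∈ Zfac a x) : z p ≤ x :=
  calc z p ≤ z p * a p := Nat.le_mul_of_pos_right _ hp
    _ ≤ ∑ j, z j * a j := single_le_sum_of_canonicallyOrdered (f := fun j ↦ z j * a j) (mem_univ p)
    _ = x := hz

theorem dotProduct_pos_of_ne_zero (ha : ∀ i, 0 < a i) (hz : z ≠ 0) : 0 < z ⬝ᵥ a := by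
  obtain ⟨i, hi⟩ := Function.ne_iff.1 hz
  exact (Nat.pos_of_ne_zero hi).trans_le (apply_le_of_mem_Zfac (ha i) rfl)

theorem lzero_mono (h : w ≤ z) : lzero w ≤ lzero z :=
  card_le_card <| monotone_filter_right _ fun i _ hi ↦
    ((Nat.pos_of_ne_zero hi).trans_le (h i)).ne'

theorem lzero_add_single_le (w : Fin k → ℕ) (i : Fin k) (c : ℕ) :
    lzero (w + Pi.single i c) ≤ lzero w + 1 := by
  let s : Finset (Fin k) := {j | w j ≠ 0}
  refine (card_le_card (t := insert i s) fun j hj ↦ ?_).trans (card_insert_le i s)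
  by_cases h : j = i <;> simp_all [s]

theorem lzero_one : lzero (1 : Fin k → ℕ) = k := by
  simp [lzero]

theorem lzero_single {i : Fin k} {c : ℕ} (hc : c ≠ 0) :
    lzero (Pi.single i c : Fin k → ℕ) = 1 := by
  simp [lzero, Pi.single_apply, hc, filter_eq']

theorem lzero_single_add_single {i j : Fin k} {c d : ℕ} (hij : i ≠ j) (hc : c ≠ 0) (hd : d ≠ 0) :
    lzero (Pi.single i c + Pi.single j d : Fin k → ℕ) = 2 := by
  rw [lzero, ← card_pair hij]
  congr 1
  ext t
  by_cases t = i <;> by_cases t = j <;> simp_all [Pi.single_apply]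

theorem exists_eq_add_single_add_single {i j : Fin k} (hij : i ≠ j) (hi : z i ≠ 0)
    (hj : z j ≠ 0) : ∃ w, z = w + (Pi.single i 1 + Pi.single j 1) := by
  have hle : Pi.single i 1 + Pi.single j 1 ≤ z := by
    intro t
    by_cases t = i <;> by_cases t = j <;> simp_all [Nat.one_le_iff_ne_zero]
  exact ⟨z - _, (tsub_add_cancel_of_le hle).symm⟩

theorem exists_pair_ne_of_three_le_lzero (p : Fin k) (hz : 3 ≤ lzero z) :
    ∃ i j, i ≠ j ∧ i ≠ p ∧ j ≠ p ∧ z i ≠ 0 ∧ z j ≠ 0 := by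
  have hcard : 1 < #(({i | z i ≠ 0} : Finset (Fin k)).erase p) := by
    have := pred_card_le_card_erase (s := {i | z i ≠ 0}) (a := p)
    unfold lzero at hz
    omega
  obtain ⟨i, hi, j, hj, hij⟩ := one_lt_card.1 hcard
  simp only [mem_erase, mem_filter_univ] at hi hj
  exact ⟨i, j, hij, hi.1, hj.1, hi.2, hj.2⟩

theorem exists_forall_eq_zero_iff_of_lzero_add_one_eq (hz : lzero z + 1 = k) :
    ∃ s, ∀ t, z t = 0 ↔ t = s := by
  have hcard : #(({t | z t ≠ 0} : Finset (Fin k))ᶜ) = 1 := by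
    rw [card_compl, Fintype.card_fin]
    unfold lzero at hz
    omega
  obtain ⟨s, hs⟩ := card_eq_one.1 hcard
  exact ⟨s, fun t ↦ by simpa using Finset.ext_iff.1 hs t⟩

theorem mem_DeltaZeroS {d : ℕ} :
    d ∈ DeltaZeroS a ↔ ∃ x, ∃ y ∈ Zfac a x, ∃ z ∈ Zfac a x, lzero y < lzero z ∧
      lzero z - lzero y = d ∧ ∀ t ∈ Zfac a x, ¬(lzero y < lzero t ∧ lzero t < lzero z) := by
  simp [DeltaZeroS, DeltaZero, LzeroSet, deltaSet]

theorem one_mem_DeltaZeroS {i j : Fin k} (hij : i ≠ j) (hi : 0 < a i) (hj : 0 < a j) :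
    1 ∈ DeltaZeroS a := by
  have hy : lzero (Pi.single i (2 * a j) : Fin k → ℕ) = 1 := lzero_single (by omega)
  have hz : lzero (Pi.single i (a j) + Pi.single j (a i) : Fin k → ℕ) = 2 :=
    lzero_single_add_single hij hj.ne' hi.ne'
  have hmem : Pi.single i (a j) + Pi.single j (a i) ∈ Zfac a (2 * a j * a i) := by
    rw [mem_Zfac, add_dotProduct, single_dotProduct, single_dotProduct]
    ring
  exact mem_DeltaZeroS.2
    ⟨_, _, single_dotProduct .., _, hmem, by omega, by omega, by omega⟩

end Factorizations

/-- Any two generators other than `a p` can be traded for a factorization of their sum that uses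
`a p`. For a minimal generating system `a` with multiplicity `a p`, this is maximal embedding
dimension. -/
def HasTradesInto {k : ℕ} (a : Fin k → ℕ) (p : Fin k) : Prop :=
  ∀ i j, i ≠ p → j ≠ p → ∃ y ∈ Zfac a (a i + a j), 0 < y p

namespace HasTradesInto

variable {k : ℕ} {a z : Fin k → ℕ} {p : Fin k} {x : ℕ}

theorem exists_lzero_le_add_two (h : HasTradesInto a p) (hz : z ∈ Zfac a x) (hlen : 3 ≤ lzero z) :
    ∃ y ∈ Zfac a x, z p < y p ∧ lzero z ≤ lzero y + 2 := by
  obtain ⟨i, j, hij, hip, hjp, hi, hj⟩ := exists_pair_ne_of_three_le_lzero p hlen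
  obtain ⟨w, rfl⟩ := exists_eq_add_single_add_single hij hi hj
  obtain ⟨y, hy, hyp⟩ := h i j hip hjp
  refine ⟨w + y, ?_, ?_, ?_⟩
  · rw [mem_Zfac] at hy hz ⊢
    simpa only [add_dotProduct, single_one_dotProduct, hy] using hz
  · simpa [hip.symm, hjp.symm] using hyp
  · calc lzero (w + (Pi.single i 1 + Pi.single j 1))
        = lzero (w + Pi.single i 1 + Pi.single j 1) := by rw [add_assoc]
      _ ≤ lzero (w + Pi.single i 1) + 1 := lzero_add_single_le ..
      _ ≤ lzero w + 2 := Nat.succ_le_succ (lzero_add_single_le ..)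
      _ ≤ lzero (w + y) + 2 := Nat.add_le_add_right (lzero_mono le_self_add) 2

theorem exists_lzero_mem_Ioc (h : HasTradesInto a p) (hp : 0 < a p) {n : ℕ} (hz : z ∈ Zfac a x)
    (hn : n < lzero z) : ∃ y ∈ Zfac a x, lzero y ∈ Set.Ioc n (n + 2) := by
  induction hd : x - z p using Nat.strong_induction_on generalizing z with
  | h d ih =>
    by_cases hle : lzero z ≤ n + 2
    · exact ⟨z, hz, hn, hle⟩
    · obtain ⟨y, hy, hlt, hlen⟩ := h.exists_lzero_le_add_two hz (by omega)
      have hyx : y p ≤ x := apply_le_of_mem_Zfac hp hy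
      exact ih (x - y p) (by omega) hy (by omega) rfl

theorem DeltaZeroS_subset (h : HasTradesInto a p) (hp : 0 < a p) : DeltaZeroS a ⊆ {1, 2} := by
  intro d hd
  obtain ⟨x, y, -, z, hz, hlt, rfl, hgap⟩ := mem_DeltaZeroS.1 hd
  obtain ⟨t, ht, hyt, hty⟩ := h.exists_lzero_mem_Ioc hp hz hlt
  have := hgap t ht
  simp only [Set.mem_insert_iff, Set.mem_singleton_iff]
  omega

end HasTradesInto

namespace MinimalGens

variable {k : ℕ} {a y z : Fin k → ℕ} {i j p : Fin k}

theorem dotProduct_ne (hmin : MinimalGens a) (hi : z i = 0) : z ⬝ᵥ a ≠ a i :=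
  fun h ↦ hmin i ⟨z, hi, h⟩

theorem pos (hmin : MinimalGens a) (i : Fin k) : 0 < a i :=
  Nat.pos_of_ne_zero fun h ↦ hmin.dotProduct_ne (z := 0) rfl (by rw [zero_dotProduct, h])

theorem lt_dotProduct_of_modEq (hmin : MinimalGens a) (hy : y ≠ 0) (hi : y i = 0)
    (hmod : y ⬝ᵥ a ≡ a i [MOD a p]) : a i < y ⬝ᵥ a := by
  by_contra! hle
  obtain ⟨c, hc⟩ := (Nat.modEq_iff_dvd' hle).1 hmod
  have hci : a i = y ⬝ᵥ a + c * a p := by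
    rw [mul_comm, ← hc, Nat.add_sub_cancel' hle]
  have hc0 : i = p → c = 0 := by
    rintro rfl
    have := dotProduct_pos_of_ne_zero hmin.pos hy
    by_contra hne
    have := Nat.le_mul_of_pos_left (a i) (Nat.pos_of_ne_zero hne)
    omega
  refine hmin.dotProduct_ne (z := y + Pi.single p c) (i := i) ?_ ?_
  · simpa [hi, Pi.single_apply] using hc0
  · rw [add_dotProduct, single_dotProduct, hci]

theorem injective_natCast (hmin : MinimalGens a) (p : Fin k) :
    Function.Injective fun i ↦ (a i : ZMod (a p)) := by
  intro i j hij
  by_contra hne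
  have hlt {s t : Fin k} (hst : t ≠ s) (h : (a s : ZMod (a p)) = a t) : a t < a s := by
    have := hmin.lt_dotProduct_of_modEq (y := Pi.single s 1) (i := t) (p := p) (by simp)
      (by simp [hst])
    rw [single_one_dotProduct] at this
    exact this ((ZMod.natCast_eq_natCast_iff _ _ _).1 h)
  exact (hlt (Ne.symm hne) hij).asymm (hlt hne hij.symm)

theorem bijective_natCast (hmin : MinimalGens a) (hp : a p = k) :
    Function.Bijective fun i ↦ (a i : ZMod (a p)) := by
  have : NeZero (a p) := ⟨(hmin.pos p).ne'⟩
  rw [Fintype.bijective_iff_injective_and_card, Fintype.card_fin, ZMod.card]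
  exact ⟨hmin.injective_natCast p, hp.symm⟩

theorem exists_modEq_add (hmin : MinimalGens a) (hp : a p = k) (hi : i ≠ p) (hj : j ≠ p) :
    ∃ r, r ≠ i ∧ r ≠ j ∧ a r ≡ a i + a j [MOD a p] := by
  have hbij := hmin.bijective_natCast hp
  have hne {t : Fin k} (ht : t ≠ p) : (a t : ZMod (a p)) ≠ 0 := fun h ↦
    ht (hbij.injective (by simp [h]))
  obtain ⟨r, hr : (a r : ZMod (a p)) = a i + a j⟩ := hbij.surjective (a i + a j)
  refine ⟨r, ?_, ?_, ?_⟩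
  · rintro rfl
    exact hne hj (left_eq_add.1 hr)
  · rintro rfl
    exact hne hi (right_eq_add.1 hr)
  · rw [← ZMod.natCast_eq_natCast_iff, hr, Nat.cast_add]

theorem hasTradesInto (hmin : MinimalGens a) (hp : a p = k) : HasTradesInto a p := by
  intro i j hi hj
  obtain ⟨r, hri, hrj, hmod⟩ := hmin.exists_modEq_add hp hi hj
  have hlt : a r < a i + a j := by
    have := hmin.lt_dotProduct_of_modEq (y := Pi.single i 1 + Pi.single j 1) (i := r) (p := p)
      (by simp [Pi.single_eq_zero_iff]) (by simp [hri, hrj])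
    simp only [add_dotProduct, single_one_dotProduct] at this
    exact this hmod.symm
  obtain ⟨c, hc⟩ := (Nat.modEq_iff_dvd' hlt.le).1 hmod
  have hc0 : 0 < c := Nat.pos_of_ne_zero fun h ↦ by
    rw [h, mul_zero] at hc
    omega
  refine ⟨Pi.single r 1 + Pi.single p c, ?_, ?_⟩
  · rw [mem_Zfac, add_dotProduct, single_one_dotProduct, single_dotProduct, mul_comm]
    omega
  · rw [Pi.add_apply, Pi.single_eq_same]
    omega

theorem lzero_add_one_ne (hmin : MinimalGens a) (hz : z ∈ Zfac a (1 ⬝ᵥ a)) : lzero z + 1 ≠ k := by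
  intro hlen
  obtain ⟨s, hs⟩ := exists_forall_eq_zero_iff_of_lzero_add_one_eq hlen
  have hsum : z - 1 + 1 = z + Pi.single s 1 := by
    funext t
    by_cases ht : t = s
    · simp [ht, (hs s).2 rfl]
    · simpa [ht] using Nat.sub_add_cancel (Nat.pos_of_ne_zero (mt (hs t).1 ht))
  refine hmin.dotProduct_ne (z := z - 1) (i := s) (by simp [(hs s).2 rfl]) ?_
  have hval := congrArg (· ⬝ᵥ a) hsum
  simp only [add_dotProduct, single_one_dotProduct, mem_Zfac.1 hz] at hval
  omega

theorem two_mem_DeltaZeroS (hmin : MinimalGens a) (h : HasTradesInto a p) (hk : 3 ≤ k) :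
    2 ∈ DeltaZeroS a := by
  have hone : (1 : Fin k → ℕ) ∈ Zfac a (1 ⬝ᵥ a) := rfl
  obtain ⟨y, hy, hlow, hhigh⟩ := h.exists_lzero_mem_Ioc (hmin.pos p) (n := k - 3) hone
    (by rw [lzero_one]; omega)
  have hlen : lzero y + 2 = k := by
    have := hmin.lzero_add_one_ne hy
    omega
  refine mem_DeltaZeroS.2 ⟨_, y, hy, 1, hone, ?_, ?_, fun t ht ↦ ?_⟩ <;> rw [lzero_one]
  · omega
  · omega
  · have := hmin.lzero_add_one_ne ht
    omega

end MinimalGens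

theorem stmt_15_general (m : ℕ) (hm : 3 ≤ m) (a : Fin m → ℕ) (p : Fin m) (hp : a p = m)
    (hmin : MinimalGens a) : DeltaZeroS a = {1, 2} := by
  have htrades : HasTradesInto a p := hmin.hasTradesInto hp
  have : Nontrivial (Fin m) := Fin.nontrivial_iff_two_le.2 (by omega)
  obtain ⟨i, hi⟩ := exists_ne p
  refine (htrades.DeltaZeroS_subset (hmin.pos p)).antisymm (Set.pair_subset ?_ ?_)
  · exact one_mem_DeltaZeroS hi (hmin.pos i) (hmin.pos p)
  · exact hmin.two_mem_DeltaZeroS htrades hm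

/-- For a maximal embedding dimension numerical semigroup
`S = ⟨m, a_1, …, a_{m−1}⟩` with `m ≥ 3` and `a_i ≡ i (mod m)`, `Δ₀(S) = {1, 2}`. -/
theorem stmt_15 (m : ℕ) (hm : 3 ≤ m) (a : Fin m → ℕ)
    (i0 : Fin m) (hi0 : (i0 : ℕ) = 0) (h0 : a i0 = m)
    (hmod : ∀ i : Fin m, a i % m = (i : ℕ))
    (hmin : MinimalGens a) :
    DeltaZeroS a = {1, 2} :=
  stmt_15_general m hm a i0 h0 hmin
end

section
/- For every integer k ≥ 16 there exists a numerical semigroup S with exactly k + 1 minimal generators such that Δ_0(S) ∩ [7k/8, k] = {k − 1, k}; that is, the only integers n with 7k/8 ≤ n ≤ k lying in Δ_0(S) are k − 1 and k. In particular, Δ_0(S) ∖ [1, max Δ_0(S)] complements can contain arbitrarily long gaps below the maximum. -/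
open Finset

/-!
Let `s` be the sum of `k` generators `a`, and suppose that `s` has no other factorization over `a`.
Over the generators `s` and `(s + 1) * a i`, the element `(s + 1 + ε) * s` with `ε ≤ 1` then has
exactly two factorizations: `s + 1 + ε` copies of `s`, and `ε` copies of `s` plus one copy of each
`(s + 1) * a i`. Their `0`-lengths `1` and `k + ε` give the gaps `k - 1` and `k`.

All other gaps are at most about `k / 2` when `a` is glued from two halves such that, over each
half, both the large elements and the sum plus any nonzero element of the semigroup have
factorizations of `0`-length at most `3`: two factorizations of the same element can then be
connected by exchanging one half at a time.

A half is `(D + 1) * 2 ^ j - 1` for `j < r`, with `D = 2 ^ r - r`. Its sum is rigid because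
`2 ^ r - 1` is a sum of at most `r` of the powers `1, 2, …, 2 ^ (r - 1)` in only one way.
-/

section FactorizationLength

variable {k m n : ℕ}

lemma lzero_zero : lzero (0 : Fin k → ℕ) = 0 := by
  simp [lzero]

lemma lzero_le (z : Fin k → ℕ) : lzero z ≤ k :=
  (card_filter_le _ _).trans_eq (card_fin k)

lemma lzero_eq_of_forall_ne_zero {z : Fin k → ℕ} (hz : ∀ i, z i ≠ 0) : lzero z = k := by
  simp [lzero, hz]

lemma lzero_mono_s19 : Monotone (lzero : (Fin k → ℕ) → ℕ) := fun z w hzw =>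
  card_le_card <| monotone_filter_right _ fun i _ hi => by have := hzw i; lia

lemma lzero_add_le (z w : Fin k → ℕ) : lzero (z + w) ≤ lzero z + lzero w := by
  refine (card_le_card fun i => ?_).trans (card_union_le _ _)
  simp only [mem_filter_univ, mem_union, Pi.add_apply]
  lia

lemma lzero_single_le (i : Fin k) (t : ℕ) : lzero (Pi.single i t) ≤ 1 := by
  refine (card_le_card (t := {i}) fun j hj => ?_).trans_eq (card_singleton i)
  by_contra hji
  simp_all

lemma lzero_vecCons (n : ℕ) (z : Fin k → ℕ) :
    lzero (Matrix.vecCons n z) = min n 1 + lzero z := by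
  simp only [lzero, card_filter, Fin.sum_univ_succ, Matrix.cons_val_zero, Matrix.cons_val_succ]
  split_ifs <;> lia

lemma lzero_append (z : Fin m → ℕ) (w : Fin n → ℕ) :
    lzero (Fin.append z w) = lzero z + lzero w := by
  simp only [lzero, card_filter, Fin.sum_univ_add, Fin.append_left, Fin.append_right]

end FactorizationLength

section DeltaSet

variable {T : Set ℕ} {u v : ℕ}

lemma sub_mem_deltaSet_pair (huv : u < v) : v - u ∈ deltaSet {u, v} := by
  refine ⟨u, by simp, v, by simp, huv, rfl, ?_⟩
  rintro t (rfl | rfl) <;> simp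

lemma sub_le_of_forall_not_between {l g : ℕ} (hgap : ∀ t ∈ T, ¬(u < t ∧ t < v)) (hl : l ∈ T)
    (hul : l ≤ u + g) (hlv : v ≤ l + g) : v - u ≤ g := by
  have := hgap l hl
  lia

end DeltaSet

/-- The sum of the generators `a` has the all-ones vector as its only factorization. -/
def SumRigid {k : ℕ} (a : Fin k → ℕ) : Prop :=
  ∀ z : Fin k → ℕ, z ⬝ᵥ a = ∑ i, a i → z = 1

namespace SumRigid

variable {k : ℕ} {a : Fin k → ℕ}

lemma eq_zero_of_dotProduct_eq_zero (ha : SumRigid a) {z : Fin k → ℕ} (hz : z ⬝ᵥ a = 0) :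
    z = 0 := by
  have h : 1 + z = 1 := ha _ (by rw [add_dotProduct, one_dotProduct, hz, add_zero])
  simpa using h

lemma pos (ha : SumRigid a) (i : Fin k) : 0 < a i := by
  by_contra! hi
  have h := ha.eq_zero_of_dotProduct_eq_zero (z := Pi.single i 1)
    (by rw [single_dotProduct]; lia)
  simpa using congrFun h i

lemma sum_pos [NeZero k] (ha : SumRigid a) : 0 < ∑ i, a i :=
  Finset.sum_pos (fun i _ => ha.pos i) univ_nonempty

lemma minimalGens (ha : SumRigid a) : MinimalGens a := by
  rintro i ⟨z, hzi, hz⟩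
  have hsingle : (Pi.single i 1 : Fin k → ℕ) ≤ 1 := by
    refine fun j => ?_
    rw [Pi.single_apply]
    split_ifs <;> simp
  have h : z + (1 - Pi.single i 1) = 1 := by
    apply ha
    have hsplit : (1 - Pi.single i 1 : Fin k → ℕ) ⬝ᵥ a + a i = ∑ j, a j := by
      rw [← single_one_dotProduct i a, ← add_dotProduct, tsub_add_cancel_of_le hsingle,
        one_dotProduct]
    rw [add_dotProduct, ← hsplit, add_comm]
    exact congrArg _ hz
  simpa [hzi] using congrFun h i

end SumRigid

/-- From generators `a` with sum `s`, the generators `s` and `(s + 1) * a i`. As `(s + 1) * s` is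
the sum of all the `(s + 1) * a i`, it has a factorization of full length over the latter, and one
of length `1` over the new generator `s`. -/
def adjoinSum {k : ℕ} (a : Fin k → ℕ) : Fin (k + 1) → ℕ :=
  Matrix.vecCons (∑ i, a i) ((∑ i, a i + 1) • a)

lemma exists_eq_vecCons {k : ℕ} (z : Fin (k + 1) → ℕ) : ∃ n y, z = Matrix.vecCons n y :=
  ⟨_, _, (Matrix.cons_head_tail z).symm⟩

lemma exists_of_mul_add_mul_eq {s n m V W : ℕ} (hmn : m ≤ n)
    (h : n * s + (s + 1) * V = m * s + (s + 1) * W) :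
    ∃ t, n = m + (s + 1) * t ∧ W = V + t * s := by
  obtain ⟨e, rfl⟩ := Nat.exists_eq_add_of_le hmn
  have hW : W ≤ e + V := by nlinarith
  obtain ⟨t, ht⟩ := Nat.exists_eq_add_of_le hW
  exact ⟨t, by nlinarith, by nlinarith⟩

section AdjoinSum

variable {k g : ℕ} {a : Fin k → ℕ}

lemma vecCons_dotProduct_adjoinSum (n : ℕ) (z a : Fin k → ℕ) :
    Matrix.vecCons n z ⬝ᵥ adjoinSum a = n * ∑ i, a i + (∑ i, a i + 1) * (z ⬝ᵥ a) := by
  rw [adjoinSum, Matrix.cons_dotProduct_cons, dotProduct_smul, smul_eq_mul]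

lemma gcd_adjoinSum (a : Fin k → ℕ) : univ.gcd (adjoinSum a) = univ.gcd a := by
  refine Nat.dvd_antisymm (dvd_gcd fun i _ => ?_) (dvd_gcd fun i _ => ?_)
  · have hsum : univ.gcd (adjoinSum a) ∣ ∑ i, a i := gcd_dvd (mem_univ 0)
    have hmul : univ.gcd (adjoinSum a) ∣ (∑ i, a i + 1) * a i := gcd_dvd (mem_univ i.succ)
    have hco : (∑ i, a i).Coprime (∑ i, a i + 1) := by simp
    exact (hco.coprime_dvd_left hsum).dvd_of_dvd_mul_left hmul
  · cases i using Fin.cases with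
    | zero =>
      change _ ∣ ∑ j, a j
      exact dvd_sum fun j _ => gcd_dvd (mem_univ j)
    | succ j =>
      change _ ∣ (∑ l, a l + 1) * a j
      exact (gcd_dvd (mem_univ j)).mul_left _

lemma SumRigid.minimalGens_adjoinSum (hk : 2 ≤ k) (ha : SumRigid a) :
    MinimalGens (adjoinSum a) := by
  have : NeZero k := ⟨by lia⟩
  rintro i ⟨z, hzi, hz⟩
  obtain ⟨n, y, rfl⟩ := exists_eq_vecCons z
  replace hz := (vecCons_dotProduct_adjoinSum n y a).symm.trans hz
  cases i using Fin.cases with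
  | zero =>
    obtain rfl : n = 0 := hzi
    have hdvd : (∑ i, a i + 1) ∣ ∑ i, a i := ⟨y ⬝ᵥ a, by simpa [adjoinSum] using hz.symm⟩
    have := Nat.le_of_dvd ha.sum_pos hdvd
    lia
  | succ j =>
    obtain ⟨t, -, ht⟩ := exists_of_mul_add_mul_eq (Nat.zero_le n)
      (hz.trans (by simp [adjoinSum] : _ = 0 * ∑ i, a i + (∑ i, a i + 1) * a j))
    have hlt : a j < ∑ i, a i := by
      have : Nontrivial (Fin k) := Fin.nontrivial_iff_two_le.mpr hk
      obtain ⟨l, hl⟩ := exists_ne j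
      exact single_lt_sum hl (mem_univ j) (mem_univ l) (ha.pos l) (fun _ _ _ => Nat.zero_le _)
    obtain rfl : t = 0 := by
      by_contra ht0
      have := Nat.le_mul_of_pos_left (∑ i, a i) (Nat.pos_of_ne_zero ht0)
      lia
    exact ha.minimalGens j ⟨y, hzi, show y ⬝ᵥ a = a j by lia⟩

lemma SumRigid.Zfac_adjoinSum [NeZero k] (ha : SumRigid a) {ε : ℕ} (hε : ε ≤ 1) :
    Zfac (adjoinSum a) ((∑ i, a i + 1 + ε) * ∑ i, a i) =
      {Matrix.vecCons (∑ i, a i + 1 + ε) 0, Matrix.vecCons ε 1} := by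
  have hs := ha.sum_pos
  ext z
  obtain ⟨n, y, rfl⟩ := exists_eq_vecCons z
  change _ ⬝ᵥ _ = _ ↔ _
  rw [vecCons_dotProduct_adjoinSum, Set.mem_insert_iff, Set.mem_singleton_iff,
    Matrix.vecCons_inj, Matrix.vecCons_inj]
  constructor
  · intro hval
    have hεn : ε ≤ n := by
      by_contra! hlt
      obtain ⟨t, ht, -⟩ := exists_of_mul_add_mul_eq hlt.le
        ((by ring : ε * ∑ i, a i + (∑ i, a i + 1) * ∑ i, a i = _).trans hval.symm)
      have : 0 < t := Nat.pos_of_ne_zero fun h => by simp [h] at ht; lia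
      nlinarith
    obtain ⟨t, rfl, ht⟩ := exists_of_mul_add_mul_eq hεn (hval.trans
      (by ring : _ = ε * ∑ i, a i + (∑ i, a i + 1) * ∑ i, a i))
    obtain rfl | rfl : t = 0 ∨ t = 1 := by
      by_contra! ht01
      have : 2 ≤ t := by lia
      nlinarith
    · exact Or.inr ⟨by simp, ha y (by simpa using ht.symm)⟩
    · exact Or.inl ⟨by lia, ha.eq_zero_of_dotProduct_eq_zero (by lia)⟩
  · rintro (⟨rfl, rfl⟩ | ⟨rfl, rfl⟩)
    · rw [zero_dotProduct, mul_zero, add_zero]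
    · rw [one_dotProduct]
      ring

lemma SumRigid.add_sub_one_mem_DeltaZeroS_adjoinSum (hk : 2 ≤ k) (ha : SumRigid a) {ε : ℕ}
    (hε : ε ≤ 1) : k + ε - 1 ∈ DeltaZeroS (adjoinSum a) := by
  have : NeZero k := ⟨by lia⟩
  have hlengths : LzeroSet (adjoinSum a) ((∑ i, a i + 1 + ε) * ∑ i, a i) = {1, k + ε} := by
    rw [LzeroSet, ha.Zfac_adjoinSum hε, Set.image_pair, lzero_vecCons, lzero_vecCons, lzero_zero,
      lzero_eq_of_forall_ne_zero (z := 1) (by simp)]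
    congr! 2 <;> lia
  refine Set.mem_iUnion.mpr ⟨(∑ i, a i + 1 + ε) * ∑ i, a i, ?_⟩
  rw [DeltaZero, hlengths]
  exact sub_mem_deltaSet_pair (by lia)

end AdjoinSum

/-- The `0`-lengths over the generators `a` interpolate with step `g`: two factorizations `z` and
`w` of the same element have a third one, at most `g` longer than `z` and at most `g` shorter than
`w`, and the sum of the generators plus a nonzero element of the semigroup has a factorization
whose `0`-length is within `g` of both `0` and `k`. -/
structure IsBalanced {k : ℕ} (a : Fin k → ℕ) (g : ℕ) : Prop where
  exists_midpoint : ∀ z w : Fin k → ℕ, z ⬝ᵥ a = w ⬝ᵥ a →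
    ∃ p : Fin k → ℕ, p ⬝ᵥ a = w ⬝ᵥ a ∧ lzero p ≤ lzero z + g ∧ lzero w ≤ lzero p + g
  exists_sum_add : ∀ z : Fin k → ℕ, z ≠ 0 →
    ∃ p : Fin k → ℕ, p ⬝ᵥ a = ∑ i, a i + z ⬝ᵥ a ∧ lzero p ≤ g ∧ k ≤ lzero p + g

namespace IsBalanced

variable {k g n m : ℕ} {a z w : Fin k → ℕ}

lemma exists_midpoint_adjoinSum_of_le (hg : IsBalanced a g) (hnm : n ≤ m)
    (h : Matrix.vecCons n z ⬝ᵥ adjoinSum a = Matrix.vecCons m w ⬝ᵥ adjoinSum a) :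
    ∃ l ∈ LzeroSet (adjoinSum a) (Matrix.vecCons m w ⬝ᵥ adjoinSum a),
      l ≤ lzero (Matrix.vecCons n z) + (g + 1) ∧ lzero (Matrix.vecCons m w) ≤ l + (g + 1) := by
  rw [vecCons_dotProduct_adjoinSum, vecCons_dotProduct_adjoinSum] at h
  obtain ⟨t, -, hzw⟩ := exists_of_mul_add_mul_eq hnm h.symm
  have hvalue : z ⬝ᵥ a = (w + t • 1) ⬝ᵥ a := by
    rw [hzw, add_dotProduct, smul_dotProduct, one_dotProduct, smul_eq_mul]
  obtain ⟨p, hp, hzp, hpw⟩ := hg.exists_midpoint z _ hvalue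
  have hle : lzero w ≤ lzero (w + t • 1) := lzero_mono_s19 le_self_add
  refine ⟨_, ⟨Matrix.vecCons n p, ?_, rfl⟩, ?_⟩
  · change _ ⬝ᵥ _ = _
    rw [vecCons_dotProduct_adjoinSum, vecCons_dotProduct_adjoinSum, hp, ← hvalue, h]
  · simp only [lzero_vecCons]
    lia

lemma exists_midpoint_adjoinSum_of_lt (ha : SumRigid a) (hg : IsBalanced a g) (hmn : m < n)
    (h : Matrix.vecCons n z ⬝ᵥ adjoinSum a = Matrix.vecCons m w ⬝ᵥ adjoinSum a) :
    (∃ l ∈ LzeroSet (adjoinSum a) (Matrix.vecCons m w ⬝ᵥ adjoinSum a),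
      l ≤ lzero (Matrix.vecCons n z) + (g + 1) ∧ lzero (Matrix.vecCons m w) ≤ l + (g + 1)) ∨
      z = 0 ∧ w = 1 := by
  simp only [vecCons_dotProduct_adjoinSum] at h ⊢
  obtain ⟨t, rfl, hzw⟩ := exists_of_mul_add_mul_eq hmn.le h
  obtain ⟨t, rfl⟩ : ∃ t', t = t' + 1 := Nat.exists_eq_succ_of_ne_zero (by rintro rfl; simp at hmn)
  have hvalue : w ⬝ᵥ a = ∑ i, a i + (z + t • 1) ⬝ᵥ a := by
    rw [hzw, add_dotProduct, smul_dotProduct, one_dotProduct, smul_eq_mul]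
    ring
  by_cases hexcess : z + t • 1 = 0
  · rw [hexcess, zero_dotProduct, add_zero] at hvalue
    exact Or.inr ⟨(add_eq_zero.mp hexcess).1, ha w hvalue⟩
  · obtain ⟨p, hp, hpg, hkp⟩ := hg.exists_sum_add _ hexcess
    have := lzero_le w
    refine Or.inl ⟨_, ⟨Matrix.vecCons m p, ?_, rfl⟩, ?_⟩
    · exact (vecCons_dotProduct_adjoinSum ..).trans (by rw [hp, hvalue])
    · simp only [lzero_vecCons]
      lia

lemma DeltaZeroS_adjoinSum_subset (ha : SumRigid a) (hg : IsBalanced a g) :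
    DeltaZeroS (adjoinSum a) ⊆ Set.Iic (g + 1) ∪ {k - 1, k} := by
  refine Set.iUnion_subset fun x => ?_
  rintro _ ⟨_, ⟨z, hz, rfl⟩, _, ⟨w, rfl, rfl⟩, -, rfl, hgap⟩
  obtain ⟨n, z, rfl⟩ := exists_eq_vecCons z
  obtain ⟨m, w, rfl⟩ := exists_eq_vecCons w
  rcases le_or_gt n m with hnm | hmn
  · obtain ⟨l, hl, hzl, hlw⟩ := hg.exists_midpoint_adjoinSum_of_le hnm hz
    exact Or.inl (sub_le_of_forall_not_between hgap hl hzl hlw)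
  · rcases hg.exists_midpoint_adjoinSum_of_lt ha hmn hz with ⟨l, hl, hzl, hlw⟩ | ⟨rfl, rfl⟩
    · exact Or.inl (sub_le_of_forall_not_between hgap hl hzl hlw)
    · right
      rw [lzero_vecCons, lzero_vecCons, lzero_zero, lzero_eq_of_forall_ne_zero (z := 1) (by simp),
        Set.mem_insert_iff, Set.mem_singleton_iff]
      lia

end IsBalanced

/-- Some factorization of `y` over the generators `a` has `0`-length at most `l`. -/
def HasShortFactorization {k : ℕ} (a : Fin k → ℕ) (l y : ℕ) : Prop :=
  ∃ z : Fin k → ℕ, z ⬝ᵥ a = y ∧ lzero z ≤ l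

lemma hasShortFactorization_three {k : ℕ} (a : Fin k → ℕ) (i j l : Fin k) (x y z : ℕ) :
    HasShortFactorization a 3 (x * a i + y * a j + z * a l) := by
  refine ⟨Pi.single i x + Pi.single j y + Pi.single l z, ?_, ?_⟩
  · simp only [add_dotProduct, single_dotProduct]
  · have hij := lzero_add_le (Pi.single i x) (Pi.single j y)
    have hijl := lzero_add_le (Pi.single i x + Pi.single j y) (Pi.single l z)
    have := lzero_single_le i x
    have := lzero_single_le j y
    have := lzero_single_le l z
    lia

/-- The gluing of two families of generators `b` and `c` with multipliers `d₁` and `d₂`. -/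
def glue {m n : ℕ} (d₁ d₂ : ℕ) (b : Fin m → ℕ) (c : Fin n → ℕ) : Fin (m + n) → ℕ :=
  Fin.append (d₁ • b) (d₂ • c)

lemma exists_eq_append {m n : ℕ} (z : Fin (m + n) → ℕ) : ∃ x y, z = Fin.append x y :=
  ⟨_, _, Fin.append_castAdd_natAdd.symm⟩

lemma add_le_of_mul_add_mul_eq_of_lt {d₁ d₂ B C B' C' : ℕ} (hd : d₁.Coprime d₂)
    (h : d₁ * B + d₂ * C = d₁ * B' + d₂ * C') (hlt : B < B') : B + d₂ ≤ B' := by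
  have hmod : d₁ * B ≡ d₁ * B' [MOD d₂] := by
    have := congrArg (· % d₂) h
    simpa only [Nat.ModEq, Nat.add_mul_mod_self_left] using this
  exact (hmod.cancel_left_of_coprime hd.symm).add_le_of_lt hlt

lemma eq_or_add_le_of_mul_add_mul_eq {d₁ d₂ B C B' C' : ℕ} (hd : d₁.Coprime d₂)
    (h : d₁ * B + d₂ * C = d₁ * B' + d₂ * C') : B = B' ∨ B + d₂ ≤ B' ∨ C + d₁ ≤ C' := by
  rcases lt_trichotomy B B' with hlt | heq | hgt
  · exact Or.inr (Or.inl (add_le_of_mul_add_mul_eq_of_lt hd h hlt))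
  · exact Or.inl heq
  · refine Or.inr (Or.inr ?_)
    obtain rfl | hd₁ := d₁.eq_zero_or_pos
    · obtain rfl : d₂ = 1 := (Nat.coprime_zero_left _).mp hd
      lia
    · have hC : C < C' := by nlinarith
      exact add_le_of_mul_add_mul_eq_of_lt hd.symm ((add_comm ..).trans (h.trans (add_comm ..))) hC

section Glue

variable {m n l d₁ d₂ : ℕ} {b : Fin m → ℕ} {c : Fin n → ℕ}

lemma append_dotProduct_glue (d₁ d₂ : ℕ) (b x : Fin m → ℕ) (c y : Fin n → ℕ) :
    Fin.append x y ⬝ᵥ glue d₁ d₂ b c = d₁ * (x ⬝ᵥ b) + d₂ * (y ⬝ᵥ c) := by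
  rw [← smul_eq_mul, ← smul_eq_mul, ← dotProduct_smul, ← dotProduct_smul]
  simp only [glue, dotProduct, Fin.sum_univ_add, Fin.append_left, Fin.append_right]

lemma sum_glue (d₁ d₂ : ℕ) (b : Fin m → ℕ) (c : Fin n → ℕ) :
    ∑ i, glue d₁ d₂ b c i = d₁ * ∑ i, b i + d₂ * ∑ i, c i := by
  simp only [glue, Fin.sum_univ_add, Fin.append_left, Fin.append_right, Pi.smul_apply, smul_eq_mul,
    mul_sum]

lemma gcd_glue (hd : d₁.Coprime d₂) (hb : univ.gcd b = 1) (hc : univ.gcd c = 1) :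
    univ.gcd (glue d₁ d₂ b c) = 1 := by
  have hdvd (i) : univ.gcd (glue d₁ d₂ b c) ∣ glue d₁ d₂ b c i := gcd_dvd (mem_univ i)
  have hgcd₁ : univ.gcd (fun i => d₁ * b i) = d₁ := by
    rw [Finset.gcd_mul_left, hb, normalize_eq, mul_one]
  have hgcd₂ : univ.gcd (fun i => d₂ * c i) = d₂ := by
    rw [Finset.gcd_mul_left, hc, normalize_eq, mul_one]
  refine Nat.eq_one_of_dvd_coprimes hd ?_ ?_
  · exact (dvd_gcd fun i _ => by simpa [glue] using hdvd (Fin.castAdd n i)).trans hgcd₁.dvd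
  · exact (dvd_gcd fun i _ => by simpa [glue] using hdvd (Fin.natAdd m i)).trans hgcd₂.dvd

lemma SumRigid.glue (hb : SumRigid b) (hc : SumRigid c) (hd : d₁.Coprime d₂)
    (hd₁ : ∑ i, c i < d₁) (hd₂ : ∑ i, b i < d₂) : SumRigid (glue d₁ d₂ b c) := by
  intro z hz
  obtain ⟨x, y, rfl⟩ := exists_eq_append z
  rw [append_dotProduct_glue, sum_glue] at hz
  have hx : x ⬝ᵥ b = ∑ i, b i := by
    have := eq_or_add_le_of_mul_add_mul_eq hd hz
    lia
  have hy : y ⬝ᵥ c = ∑ i, c i := by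
    rw [hx] at hz
    exact Nat.eq_of_mul_eq_mul_left (by lia) (Nat.add_left_cancel hz)
  rw [hb x hx, hc y hy]
  funext i
  cases i using Fin.addCases <;> simp

lemma exists_midpoint_glue (hd : d₁.Coprime d₂) (hb : ∀ y ≥ d₂, HasShortFactorization b l y)
    (hc : ∀ y ≥ d₁, HasShortFactorization c l y) {z w : Fin (m + n) → ℕ}
    (hzw : z ⬝ᵥ glue d₁ d₂ b c = w ⬝ᵥ glue d₁ d₂ b c) :
    ∃ p : Fin (m + n) → ℕ, p ⬝ᵥ glue d₁ d₂ b c = w ⬝ᵥ glue d₁ d₂ b c ∧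
      lzero p ≤ lzero z + (max m n + l) ∧ lzero w ≤ lzero p + (max m n + l) := by
  obtain ⟨x, y, rfl⟩ := exists_eq_append z
  obtain ⟨u, v, rfl⟩ := exists_eq_append w
  simp only [append_dotProduct_glue, lzero_append] at hzw ⊢
  have := lzero_le u
  have := lzero_le v
  rcases eq_or_add_le_of_mul_add_mul_eq hd hzw with hB | hB | hC
  · refine ⟨Fin.append x v, ?_, ?_⟩
    · rw [append_dotProduct_glue, hB]
    · rw [lzero_append]
      lia
  · obtain ⟨u', hu', hl⟩ := hb (u ⬝ᵥ b) (by lia)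
    refine ⟨Fin.append u' v, ?_, ?_⟩
    · rw [append_dotProduct_glue, hu']
    · rw [lzero_append]
      lia
  · obtain ⟨v', hv', hl⟩ := hc (v ⬝ᵥ c) (by lia)
    refine ⟨Fin.append u v', ?_, ?_⟩
    · rw [append_dotProduct_glue, hv']
    · rw [lzero_append]
      lia

lemma exists_sum_add_glue (d₁ d₂ : ℕ)
    (hb : ∀ z ≠ 0, HasShortFactorization b l (∑ i, b i + z ⬝ᵥ b))
    (hc : ∀ z ≠ 0, HasShortFactorization c l (∑ i, c i + z ⬝ᵥ c)) {z : Fin (m + n) → ℕ}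
    (hz : z ≠ 0) :
    ∃ p : Fin (m + n) → ℕ, p ⬝ᵥ glue d₁ d₂ b c =
      ∑ i, glue d₁ d₂ b c i + z ⬝ᵥ glue d₁ d₂ b c ∧
      lzero p ≤ max m n + l ∧ m + n ≤ lzero p + (max m n + l) := by
  obtain ⟨x, y, rfl⟩ := exists_eq_append z
  rw [append_dotProduct_glue, sum_glue]
  by_cases hx : x = 0
  · have hy : y ≠ 0 := by
      rintro rfl
      exact hz (by funext i; cases i using Fin.addCases <;> simp [hx])
    obtain ⟨p, hp, hl⟩ := hc y hy
    refine ⟨Fin.append (1 + x) p, ?_, ?_⟩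
    · rw [append_dotProduct_glue, add_dotProduct, one_dotProduct, hp]
      ring
    · rw [lzero_append, lzero_eq_of_forall_ne_zero (z := 1 + x) (by simp)]
      lia
  · obtain ⟨p, hp, hl⟩ := hb x hx
    refine ⟨Fin.append p (1 + y), ?_, ?_⟩
    · rw [append_dotProduct_glue, add_dotProduct, one_dotProduct, hp]
      ring
    · rw [lzero_append, lzero_eq_of_forall_ne_zero (z := 1 + y) (by simp)]
      lia

lemma isBalanced_glue (hd : d₁.Coprime d₂) (hb : ∀ y ≥ d₂, HasShortFactorization b l y)
    (hc : ∀ y ≥ d₁, HasShortFactorization c l y)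
    (hb' : ∀ z ≠ 0, HasShortFactorization b l (∑ i, b i + z ⬝ᵥ b))
    (hc' : ∀ z ≠ 0, HasShortFactorization c l (∑ i, c i + z ⬝ᵥ c)) :
    IsBalanced (glue d₁ d₂ b c) (max m n + l) where
  exists_midpoint _ _ := exists_midpoint_glue hd hb hc
  exists_sum_add _ := exists_sum_add_glue d₁ d₂ hb' hc'

end Glue

section PowersOfTwo

lemma sum_two_pow_add_one (r : ℕ) : ∑ j : Fin r, 2 ^ (j : ℕ) + 1 = 2 ^ r := by
  rw [Fin.sum_univ_eq_sum_range (2 ^ ·), Nat.geomSum_eq le_rfl]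
  have := Nat.one_le_two_pow (n := r)
  lia

/-- The induction strips off the digit `z 0`, which leaves half of `z 0 + q - 1` as a carry `q'`;
since each unit of the carry absorbs two summands, it counts twice in `hcard`. -/
lemma eq_zero_and_eq_one_of_sum_mul_two_pow {r : ℕ} (z : Fin r → ℕ) (q : ℕ)
    (hsum : ∑ j, z j * 2 ^ (j : ℕ) + q + 1 = 2 ^ r) (hcard : ∑ j, z j + 2 * q ≤ r) :
    q = 0 ∧ z = 1 := by
  induction r generalizing q with
  | zero => exact ⟨by lia, Subsingleton.elim _ _⟩
  | succ r ih =>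
    have htail : ∑ j : Fin r, z j.succ * 2 ^ (j.succ : ℕ) =
        2 * ∑ j : Fin r, Fin.tail z j * 2 ^ (j : ℕ) := by
      rw [mul_sum]
      exact sum_congr rfl fun j _ => by rw [Fin.val_succ, pow_succ, Fin.tail]; ring
    rw [Fin.sum_univ_succ, htail, pow_succ, Fin.val_zero, pow_zero, mul_one] at hsum
    rw [Fin.sum_univ_succ] at hcard
    change z 0 + ∑ j, Fin.tail z j + 2 * q ≤ r + 1 at hcard
    obtain ⟨q', hq'⟩ : ∃ q', z 0 + q = 2 * q' + 1 := ⟨(z 0 + q) / 2, by lia⟩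
    obtain ⟨rfl, hz⟩ := ih (Fin.tail z) q' (by lia) (by lia)
    rw [hz] at hcard
    simp only [Pi.one_apply, sum_const, card_univ, Fintype.card_fin, smul_eq_mul] at hcard
    refine ⟨by lia, funext fun j => ?_⟩
    cases j using Fin.cases with
    | zero => change z 0 = 1; lia
    | succ j => exact congrFun hz j

lemma le_of_add_eq_two_pow {D r : ℕ} (hD : D + r = 2 ^ r) : r ≤ D := by
  have := Nat.mul_le_pow (by lia : 2 ≠ 1) r
  lia

lemma two_pow_eq_sum_of_two_consecutive_powers {r n : ℕ} (hn : 2 ≤ n) (hnr : n < 2 ^ r) :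
    ∃ q x y, q + 1 < r ∧ x + y = n ∧ x * 2 ^ (q + 1) + y * 2 ^ q = 2 ^ r := by
  obtain ⟨t, ht⟩ : ∃ t, Nat.log 2 n = t := ⟨_, rfl⟩
  obtain ⟨hle, hlt⟩ := (Nat.log_eq_iff (by lia)).mp ht
  have htr : t < r := ht ▸ Nat.log_lt_of_lt_pow (by lia) hnr
  have ht0 : 0 < t := ht ▸ Nat.log_pos (by lia) hn
  obtain ⟨e, rfl⟩ := Nat.exists_eq_add_of_le hle
  obtain ⟨x, hx⟩ := Nat.exists_eq_add_of_le (show e ≤ 2 ^ t by rw [pow_succ] at hlt; lia)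
  obtain ⟨q, rfl⟩ := Nat.exists_eq_add_of_lt htr
  refine ⟨q, x, 2 * e, by lia, by lia, ?_⟩
  rw [show t + q + 1 = (q + 1) + t by ring, pow_add _ (q + 1), hx, pow_succ]
  ring

end PowersOfTwo

/-- The generators `(D + 1) * 2 ^ j - 1` with `j < r`. For `D = 2 ^ r - r` their sum has only one
factorization, but the sum plus any nonzero element of the semigroup has one of `0`-length at most
`3`. -/
def powBlock (D r : ℕ) (j : Fin r) : ℕ :=
  (D + 1) * 2 ^ (j : ℕ) - 1

section PowBlock

variable {D r : ℕ}

lemma powBlock_add_one (D : ℕ) (j : Fin r) : powBlock D r j + 1 = (D + 1) * 2 ^ (j : ℕ) :=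
  Nat.sub_add_cancel (Nat.mul_pos D.succ_pos (by positivity))

lemma powBlock_zero (D : ℕ) (hr : 0 < r) : powBlock D r ⟨0, hr⟩ = D := by
  simp [powBlock]

lemma powBlock_one (D : ℕ) (hr : 1 < r) : powBlock D r ⟨1, hr⟩ = 2 * D + 1 := by
  simp only [powBlock, pow_one]
  lia

lemma dotProduct_powBlock_add_sum (D : ℕ) (z : Fin r → ℕ) :
    z ⬝ᵥ powBlock D r + ∑ j, z j = (D + 1) * ∑ j, z j * 2 ^ (j : ℕ) := by
  simp only [dotProduct, ← sum_add_distrib, ← mul_add_one, powBlock_add_one, mul_sum,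
    mul_left_comm]

lemma sum_powBlock_add_add (D r : ℕ) :
    ∑ j, powBlock D r j + r + (D + 1) = (D + 1) * 2 ^ r := by
  have h := dotProduct_powBlock_add_sum D (1 : Fin r → ℕ)
  simp only [one_dotProduct, Pi.one_apply, one_mul, sum_const, card_univ, Fintype.card_fin,
    smul_eq_mul, mul_one] at h
  rw [h, ← sum_two_pow_add_one]
  ring

lemma gcd_powBlock (D : ℕ) (hr : 2 ≤ r) : univ.gcd (powBlock D r) = 1 := by
  have h₀ : univ.gcd (powBlock D r) ∣ D :=
    (gcd_dvd (mem_univ _)).trans (powBlock_zero D (by lia)).dvd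
  have h₁ : univ.gcd (powBlock D r) ∣ 2 * D + 1 :=
    (gcd_dvd (mem_univ _)).trans (powBlock_one D hr).dvd
  exact Nat.dvd_one.mp ((Nat.dvd_add_right (h₀.mul_left 2)).mp h₁)

lemma sumRigid_powBlock (hD : D + r = 2 ^ r) : SumRigid (powBlock D r) := by
  intro z hz
  have hrD := le_of_add_eq_two_pow hD
  have hcount := dotProduct_powBlock_add_sum D z
  have hsum := sum_powBlock_add_add D r
  have hcard : ∑ j, z j ≤ ∑ j, z j * 2 ^ (j : ℕ) :=
    sum_le_sum fun j _ => Nat.le_mul_of_pos_right _ (by positivity)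
  replace hcount : (D + 1) * 2 ^ r + ∑ j, z j = (D + 1) * (∑ j, z j * 2 ^ (j : ℕ) + 1) + r := by
    linarith
  have hweight : ∑ j, z j * 2 ^ (j : ℕ) + 1 = 2 ^ r := by
    rcases lt_trichotomy (∑ j, z j * 2 ^ (j : ℕ) + 1) (2 ^ r) with hlt | heq | hgt
    · have := Nat.mul_le_mul_left (D + 1) (Nat.succ_le_of_lt hlt)
      lia
    · exact heq
    · nlinarith
  rw [hweight] at hcount
  exact (eq_zero_and_eq_one_of_sum_mul_two_pow z 0 hweight (by lia)).2

lemma hasShortFactorization_powBlock_mul_add (hr : 2 ≤ r) {q e : ℕ} (he : 2 * e ≤ q) :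
    HasShortFactorization (powBlock D r) 3 (D * q + e) := by
  obtain ⟨x, rfl⟩ := Nat.exists_eq_add_of_le he
  convert hasShortFactorization_three (powBlock D r) ⟨0, by lia⟩ ⟨1, hr⟩ ⟨0, by lia⟩ x e 0 using 1
  rw [powBlock_zero, powBlock_one]
  ring

lemma hasShortFactorization_powBlock_of_le (hr : 2 ≤ r) (hD : 0 < D) {y : ℕ} (hy : 2 * D * D ≤ y) :
    HasShortFactorization (powBlock D r) 3 y := by
  rw [← Nat.div_add_mod y D]
  have hdiv : 2 * D ≤ y / D := (Nat.le_div_iff_mul_le hD).mpr hy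
  have hmod := Nat.mod_lt y hD
  exact hasShortFactorization_powBlock_mul_add hr (by lia)

lemma hasShortFactorization_powBlock_sum_add_mul (hr : 2 ≤ r) (hD : D + r = 2 ^ r) (n : ℕ) :
    HasShortFactorization (powBlock D r) 3 (∑ j, powBlock D r j + (n + 1) * D) := by
  have hrD := le_of_add_eq_two_pow hD
  -- The sum plus `D` is `(D + 1) * 2 ^ r - (r + 1)`, so writing `2 ^ r` as a sum of `r + 1` powers
  -- of two writes it as a sum of `r + 1` generators.
  obtain ⟨q, x, y, hq, hxy, hpow⟩ :=
    two_pow_eq_sum_of_two_consecutive_powers (n := r + 1) (r := r) (by lia) (by lia)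
  convert hasShortFactorization_three (powBlock D r) ⟨q + 1, hq⟩ ⟨q, by lia⟩ ⟨0, by lia⟩ x y n
    using 1
  have hsum := sum_powBlock_add_add D r
  have hq₁ := congrArg (x * ·) (powBlock_add_one D (⟨q + 1, hq⟩ : Fin r))
  have hq₀ := congrArg (y * ·) (powBlock_add_one D (⟨q, by lia⟩ : Fin r))
  rw [powBlock_zero]
  simp only at hq₁ hq₀
  nlinarith

lemma hasShortFactorization_powBlock_sum_add_dotProduct (hr : 2 ≤ r) (hD : D + r = 2 ^ r)
    {z : Fin r → ℕ} (hz : z ≠ 0) :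
    HasShortFactorization (powBlock D r) 3 (∑ j, powBlock D r j + z ⬝ᵥ powBlock D r) := by
  have hrD := le_of_add_eq_two_pow hD
  have hcard : 0 < ∑ j, z j := by
    contrapose! hz
    exact funext fun j => by simpa using sum_eq_zero_iff.mp (Nat.le_zero.mp hz) j (mem_univ j)
  have hweight : ∑ j, z j ≤ ∑ j, z j * 2 ^ (j : ℕ) :=
    sum_le_sum fun j _ => Nat.le_mul_of_pos_right _ (by positivity)
  have hvalue := dotProduct_powBlock_add_sum D z
  have hsum := sum_powBlock_add_add D r
  obtain ⟨n, hn⟩ := Nat.exists_eq_add_of_lt hcard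
  obtain ⟨m, hm⟩ := Nat.exists_eq_add_of_le hweight
  rw [hm] at hvalue
  rcases m with _ | m
  · have : z ⬝ᵥ powBlock D r = (n + 1) * D := by nlinarith
    rw [this]
    exact hasShortFactorization_powBlock_sum_add_mul hr hD n
  · have hsplit : ∑ j, powBlock D r j + z ⬝ᵥ powBlock D r =
        D * (2 ^ r + (∑ j, z j + (m + 1)) + m / D) + m % D := by
      have := Nat.div_add_mod m D
      nlinarith
    have hmod := Nat.mod_lt m (by lia : 0 < D)
    have := Nat.mod_le m D
    rw [hsplit]
    exact hasShortFactorization_powBlock_mul_add hr (by lia)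

end PowBlock

lemma exists_gcd_eq_one_and_sumRigid_and_isBalanced {k : ℕ} (hk : 4 ≤ k) :
    ∃ a : Fin k → ℕ, univ.gcd a = 1 ∧ SumRigid a ∧ IsBalanced a ((k + 1) / 2 + 3) := by
  obtain ⟨m, n, hm, hn, rfl, hmax⟩ :
      ∃ m n, 2 ≤ m ∧ 2 ≤ n ∧ k = m + n ∧ (k + 1) / 2 = max m n :=
    ⟨k / 2, (k + 1) / 2, by lia, by lia, by lia, by lia⟩
  obtain ⟨D, hD⟩ := Nat.exists_eq_add_of_le' (Nat.lt_two_pow_self (n := m)).le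
  obtain ⟨E, hE⟩ := Nat.exists_eq_add_of_le' (Nat.lt_two_pow_self (n := n)).le
  have hmD := le_of_add_eq_two_pow hD.symm
  have hnE := le_of_add_eq_two_pow hE.symm
  obtain ⟨d, hb, hc, hbd, hcd⟩ : ∃ d, ∑ j, powBlock D m j < d ∧ ∑ j, powBlock E n j < d ∧
      2 * D * D ≤ d ∧ 2 * E * E ≤ d :=
    ⟨∑ j, powBlock D m j + ∑ j, powBlock E n j + 2 * D * D + 2 * E * E + 1, by lia⟩
  have hd : d.Coprime (d + 1) := by simp
  refine ⟨glue d (d + 1) (powBlock D m) (powBlock E n), ?_, ?_, ?_⟩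
  · exact gcd_glue hd (gcd_powBlock D hm) (gcd_powBlock E hn)
  · exact (sumRigid_powBlock hD.symm).glue (sumRigid_powBlock hE.symm) hd hc (by lia)
  · rw [hmax]
    exact isBalanced_glue hd (fun y hy => hasShortFactorization_powBlock_of_le hm (by lia) (by lia))
      (fun y hy => hasShortFactorization_powBlock_of_le hn (by lia) (by lia))
      (fun _ => hasShortFactorization_powBlock_sum_add_dotProduct hm hD.symm)
      (fun _ => hasShortFactorization_powBlock_sum_add_dotProduct hn hE.symm)

theorem stmt_19_general (k : ℕ) (hk : 4 ≤ k) :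
    ∃ a : Fin (k + 1) → ℕ,
      Finset.univ.gcd a = 1 ∧ MinimalGens a ∧ {k - 1, k} ⊆ DeltaZeroS a ∧
      DeltaZeroS a ⊆ Set.Iic ((k + 1) / 2 + 4) ∪ {k - 1, k} := by
  obtain ⟨a, hgcd, ha, hbal⟩ := exists_gcd_eq_one_and_sumRigid_and_isBalanced hk
  refine ⟨adjoinSum a, (gcd_adjoinSum a).trans hgcd, ha.minimalGens_adjoinSum (by lia), ?_,
    hbal.DeltaZeroS_adjoinSum_subset ha⟩
  rintro n (rfl | rfl)
  · exact ha.add_sub_one_mem_DeltaZeroS_adjoinSum (by lia) zero_le_one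
  · exact ha.add_sub_one_mem_DeltaZeroS_adjoinSum (by lia) le_rfl

/-- For every `k ≥ 16` there is a numerical semigroup `S` with exactly `k + 1` minimal
generators such that the only `n` with `7k/8 ≤ n ≤ k` lying in `Δ₀(S)` are `k − 1`
and `k`. -/
theorem stmt_19 (k : ℕ) (hk : 16 ≤ k) :
    ∃ a : Fin (k + 1) → ℕ,
      Finset.univ.gcd a = 1 ∧ MinimalGens a ∧
      {n : ℕ | n ∈ DeltaZeroS a ∧ 7 * k ≤ 8 * n ∧ n ≤ k} = {k - 1, k} := by
  obtain ⟨a, hgcd, hmin, hmem, hsubset⟩ := stmt_19_general k (by lia)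
  refine ⟨a, hgcd, hmin, Set.Subset.antisymm ?_ fun n hn => ⟨hmem hn, ?_⟩⟩
  · rintro n ⟨hn, hlow, -⟩
    exact (hsubset hn).resolve_left fun hle => by rw [Set.mem_Iic] at hle; lia
  · rcases hn with rfl | rfl <;> lia
end
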